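/- Let F be a field of characteristic zero, let A be a finite-dimensional associative F-algebra with a ℤ₂-grading A = A₀ ⊕ A₁ (so A_i·A_j ⊆ A_{i+j}), and let J(V,f) be the Jordan superalgebra of a nondegenerate supersymmetric bilinear superform with V₁ ≠ {0}. Then there is no injective F-linear map φ : J(V,f) → A satisfying: φ maps F·1 ⊕ V₀ into A₀ and V₁ into A₁; φ(u∘w) = (φ(u)φ(w) + φ(w)φ(u))/2 whenever u or w lies in the even part of J(V,f); and φ(u∘w) = (φ(u)φ(w) − φ(w)φ(u))/2 whenever u, w ∈ V₁. -/

import Mathlib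

namespace JVF

variable (F : Type*) [Field F]
variable (V0 V1 : Type*) [AddCommGroup V0] [Module F V0] [AddCommGroup V1] [Module F V1]

/-- The product of the Jordan superalgebra `J(V,f) = F·1 ⊕ V₀ ⊕ V₁` of a supersymmetric
bilinear superform (`f = f0 ⊥ f1`, `f0` on `V₀`, `f1` on `V₁`), realized on
`F × V0 × V1`:  `(α·1 + v)∘(β·1 + w) = (αβ + f(v,w))·1 + αw + βv`. -/
def jvf (f0 : V0 →ₗ[F] V0 →ₗ[F] F) (f1 : V1 →ₗ[F] V1 →ₗ[F] F)
    (u v : F × V0 × V1) : F × V0 × V1 :=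
  (u.1 * v.1 + f0 u.2.1 v.2.1 + f1 u.2.2 v.2.2,
   u.1 • v.2.1 + v.1 • u.2.1,
   u.1 • v.2.2 + v.1 • u.2.2)

/-!
An odd pair `x`, `y` with `f1 x y ≠ 0` makes the idempotent `φ 1` a linear combination of
commutators, so left multiplication by `φ 1` has trace zero. In characteristic zero the trace of an
idempotent endomorphism is its rank, whence `φ 1 = 0`, and then `φ u = φ (1 ∘ u) = 0` for all `u`.
-/

section Commutator

variable {R A : Type*} [CommRing R] [NonUnitalRing A] [Module R A]
  [IsScalarTower R A A] [SMulCommClass R A A]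

theorem trace_mulLeft_eq_zero_of_mem_span_commutator {z : A}
    (hz : z ∈ Submodule.span R {c | ∃ a b : A, c = a * b - b * a}) :
    LinearMap.trace R A (LinearMap.mulLeft R z) = 0 := by
  suffices h : Submodule.span R {c | ∃ a b : A, c = a * b - b * a} ≤
      LinearMap.ker (LinearMap.trace R A ∘ₗ LinearMap.mul R A) from h hz
  rw [Submodule.span_le]
  rintro _ ⟨a, b, rfl⟩
  change LinearMap.trace R A (NonUnitalAlgHom.lmul R A (a * b - b * a)) = 0
  rw [map_sub, map_mul, map_mul, map_sub, LinearMap.trace_mul_comm, sub_self]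

theorem eq_zero_of_isIdempotentElem_of_mem_span_commutator [CharZero R] [IsDomain R]
    [IsPrincipalIdealRing R] [Module.Free R A] [Module.Finite R A] {e : A}
    (he : IsIdempotentElem e)
    (hspan : e ∈ Submodule.span R {c | ∃ a b : A, c = a * b - b * a}) : e = 0 := by
  have hidem : IsIdempotentElem (LinearMap.mulLeft R e) := he.map (NonUnitalAlgHom.lmul R A)
  have hzero : LinearMap.mulLeft R e = 0 :=
    LinearMap.IsIdempotentElem.eq_zero_of_trace_eq_zero hidem
      (trace_mulLeft_eq_zero_of_mem_span_commutator hspan)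
  calc
    e = LinearMap.mulLeft R e e := he.symm
    _ = 0 := by rw [hzero, LinearMap.zero_apply]

end Commutator

section Specialization

variable {F V0 V1} {A : Type*} [NonUnitalRing A] [Module F A]
  {f0 : V0 →ₗ[F] V0 →ₗ[F] F} {f1 : V1 →ₗ[F] V1 →ₗ[F] F} {φ : (F × V0 × V1) →ₗ[F] A}

theorem jvf_one_left (u : F × V0 × V1) : jvf F V0 V1 f0 f1 (1, 0, 0) u = u := by
  simp [jvf]

theorem jvf_odd_odd (x y : V1) :
    jvf F V0 V1 f0 f1 (0, 0, x) (0, 0, y) = f1 x y • (1, 0, 0) := by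
  simp [jvf]

variable (f0 f1 φ) in
/-- A specialization of `J(V,f)` in an associative algebra `A`: a linear map that turns the product
of `J(V,f)` into the super-symmetrized product of `A`. The algebra `A` carries no grading here; the
parities in the super-symmetrized product are those of the arguments in `J(V,f)`.
The notion is meant for `2 ≠ 0` in `F`, since otherwise `2⁻¹ = 0`. -/
structure IsSpecialization : Prop where
  map_even (u w : F × V0 × V1) (h : u.2.2 = 0 ∨ w.2.2 = 0) :
    φ (jvf F V0 V1 f0 f1 u w) = (2 : F)⁻¹ • (φ u * φ w + φ w * φ u)
  map_odd (x y : V1) :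
    φ (jvf F V0 V1 f0 f1 (0, 0, x) (0, 0, y)) =
      (2 : F)⁻¹ • (φ (0, 0, x) * φ (0, 0, y) - φ (0, 0, y) * φ (0, 0, x))

namespace IsSpecialization

theorem isIdempotentElem_map_one [NeZero (2 : F)] (hφ : IsSpecialization f0 f1 φ) :
    IsIdempotentElem (φ (1, 0, 0)) := by
  have h := hφ.map_even (1, 0, 0) (1, 0, 0) (Or.inl rfl)
  rw [jvf_one_left, ← two_smul F, inv_smul_smul₀ two_ne_zero] at h
  exact h.symm

theorem eq_zero_of_map_one_eq_zero (hφ : IsSpecialization f0 f1 φ)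
    (hone : φ (1, 0, 0) = 0) : φ = 0 := by
  refine LinearMap.ext fun u => ?_
  have h := hφ.map_even (1, 0, 0) u (Or.inl rfl)
  rwa [jvf_one_left, hone, zero_mul, mul_zero, add_zero, smul_zero] at h

theorem map_one_mem_span_commutator (hφ : IsSpecialization f0 f1 φ) (hf1 : f1 ≠ 0) :
    φ (1, 0, 0) ∈ Submodule.span F {c | ∃ a b : A, c = a * b - b * a} := by
  obtain ⟨x, y, hxy⟩ : ∃ x y, f1 x y ≠ 0 := by
    contrapose! hf1
    exact LinearMap.ext₂ hf1
  have h := hφ.map_odd x y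
  rw [jvf_odd_odd, map_smul] at h
  rw [← Submodule.smul_mem_iff _ hxy, h]
  exact Submodule.smul_mem _ _ (Submodule.subset_span ⟨_, _, rfl⟩)

end IsSpecialization

theorem no_JVf_in_finite_dimensional_associative_general [CharZero F] [IsScalarTower F A A]
    [SMulCommClass F A A] [FiniteDimensional F A] (hf1 : f1 ≠ 0)
    (hφ : IsSpecialization f0 f1 φ) : φ = 0 :=
  hφ.eq_zero_of_map_one_eq_zero <|
    eq_zero_of_isIdempotentElem_of_mem_span_commutator hφ.isIdempotentElem_map_one
      (hφ.map_one_mem_span_commutator hf1)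

end Specialization

/-- if `V₁ ≠ 0`, there is no injective linear map from `J(V,f)` into a
finite-dimensional associative `F`-algebra `A` with ℤ₂-grading `A = A₀ ⊕ A₁` that maps
`F·1 ⊕ V₀` into `A₀` and `V₁` into `A₁` and turns the super-Jordan product into
`(ab+ba)/2` (when a factor is even) resp. `(ab−ba)/2` (when both factors are odd). -/
theorem no_JVf_in_finite_dimensional_associative
    (F : Type*) [Field F] [CharZero F]
    (V0 V1 : Type*) [AddCommGroup V0] [Module F V0] [FiniteDimensional F V0]
    [AddCommGroup V1] [Module F V1] [FiniteDimensional F V1]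
    (f0 : V0 →ₗ[F] V0 →ₗ[F] F) (hf0s : f0.IsSymm) (hf0n : f0.SeparatingLeft)
    (f1 : V1 →ₗ[F] V1 →ₗ[F] F) (hf1a : f1.IsAlt) (hf1n : f1.SeparatingLeft)
    (hV1 : ∃ x : V1, x ≠ 0)
    (A : Type*) [Ring A] [Algebra F A] [FiniteDimensional F A]
    (A0 A1 : Submodule F A)
    (hsup : A0 ⊔ A1 = ⊤) (hinf : A0 ⊓ A1 = ⊥)
    (h00 : ∀ a ∈ A0, ∀ b ∈ A0, a * b ∈ A0)
    (h01 : ∀ a ∈ A0, ∀ b ∈ A1, a * b ∈ A1)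
    (h10 : ∀ a ∈ A1, ∀ b ∈ A0, a * b ∈ A1)
    (h11 : ∀ a ∈ A1, ∀ b ∈ A1, a * b ∈ A0) :
    ¬ ∃ φ : (F × V0 × V1) →ₗ[F] A,
        Function.Injective φ ∧
        (∀ (α : F) (v : V0), φ (α, v, 0) ∈ A0) ∧
        (∀ x : V1, φ ((0 : F), (0 : V0), x) ∈ A1) ∧
        (∀ u w : F × V0 × V1, u.2.2 = 0 ∨ w.2.2 = 0 →
          φ (jvf F V0 V1 f0 f1 u w) = (2 : F)⁻¹ • (φ u * φ w + φ w * φ u)) ∧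
        (∀ x y : V1,
          φ (jvf F V0 V1 f0 f1 ((0 : F), (0 : V0), x) ((0 : F), (0 : V0), y)) =
            (2 : F)⁻¹ • (φ ((0 : F), (0 : V0), x) * φ ((0 : F), (0 : V0), y) -
              φ ((0 : F), (0 : V0), y) * φ ((0 : F), (0 : V0), x))) := by
  rintro ⟨φ, hinj, -, -, heven, hodd⟩
  obtain ⟨x, hx⟩ := hV1
  have hf1 : f1 ≠ 0 := by
    rintro rfl
    exact hx (hf1n x fun _ => rfl)
  obtain rfl : φ = 0 := no_JVf_in_finite_dimensional_associative_general hf1 ⟨heven, hodd⟩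
  have hx0 : ((0 : F), (0 : V0), x) = 0 := hinj rfl
  exact hx (congrArg (fun u => u.2.2) hx0)

end JVF
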